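/- Let L be a finite-dimensional Leibniz algebra over a field F, and let S and T be subalgebras of L that are nil on L such that S is contained in the normalizer of T. Then the subalgebra S + T is nil on L. -/

import Mathlib

/-!
Basic theory of (left) Leibniz algebras, formalized over an arbitrary field `F`.
A Leibniz algebra structure on an `F`-vector space `L` is given by a bilinear
multiplication `m : L →ₗ[F] L →ₗ[F] L` satisfying the left Leibniz identity.
-/

open Submodule Module

section LeibnizDefs

variable {F : Type*} [Field F] {L : Type*} [AddCommGroup L] [Module F L]
variable (m : L →ₗ[F] L →ₗ[F] L)

/-- The left Leibniz identity: `a(bc) = (ab)c + b(ac)`. -/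
def IsLeibniz : Prop :=
  ∀ a b c : L, m a (m b c) = m (m a b) c + m b (m a c)

/-- The multiplication is antisymmetric, i.e. the algebra is a Lie algebra. -/
def IsLie : Prop := ∀ a b : L, m a b = - m b a

/-- The product of two subspaces: the span of all products `x·y`, `x ∈ P`, `y ∈ Q`. -/
abbrev mprod (P Q : Submodule F L) : Submodule F L := Submodule.map₂ m P Q

/-- A subalgebra: a subspace closed under multiplication. -/
def IsSubalg (S : Submodule F L) : Prop := ∀ x ∈ S, ∀ y ∈ S, m x y ∈ S

/-- An ideal of `L`: a subspace `I` with `L·I ⊆ I` and `I·L ⊆ I`. -/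
def IsIdeal (I : Submodule F L) : Prop :=
  ∀ (x : L), ∀ y ∈ I, m x y ∈ I ∧ m y x ∈ I

/-- An ideal `I` of a subalgebra `S`. -/
def IsIdealOf (S I : Submodule F L) : Prop :=
  I ≤ S ∧ ∀ x ∈ S, ∀ y ∈ I, m x y ∈ I ∧ m y x ∈ I

/-- A minimal ideal: a nonzero ideal containing no nonzero proper subideal of `L`. -/
def IsMinIdeal (A : Submodule F L) : Prop :=
  IsIdeal m A ∧ A ≠ ⊥ ∧ ∀ J, IsIdeal m J → J ≤ A → J = ⊥ ∨ J = A

/-- The derived series of a subspace: `S^(0) = S`, `S^(n+1) = S^(n)·S^(n)`. -/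
def derSeries (S : Submodule F L) : ℕ → Submodule F L
  | 0 => S
  | n + 1 => mprod m (derSeries S n) (derSeries S n)

/-- A subalgebra is solvable if its derived series reaches `0`. -/
def IsSolvableSub (S : Submodule F L) : Prop := ∃ n, derSeries m S n = ⊥

/-- The Leibniz algebra `L` is solvable. -/
abbrev IsSolvableAlg : Prop := IsSolvableSub m (⊤ : Submodule F L)

/-- The lower central series of a subspace: `N^1 = N`, `N^(k+1) = N·N^k`. -/
def lcSeries (N : Submodule F L) : ℕ → Submodule F L
  | 0 => N
  | k + 1 => mprod m N (lcSeries N k)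

/-- A subalgebra is nilpotent if its lower central series reaches `0`. -/
def IsNilpotentSub (N : Submodule F L) : Prop := ∃ k, lcSeries m N k = ⊥

/-- A subalgebra `S` is strongly solvable if `S² = S·S` is nilpotent. -/
def IsStronglySolvable (S : Submodule F L) : Prop :=
  IsNilpotentSub m (mprod m S S)

/-- A maximal subalgebra: a proper subalgebra not contained in any larger proper
subalgebra. -/
def IsMaxSubalg (S : Submodule F L) : Prop :=
  IsSubalg m S ∧ S ≠ ⊤ ∧ ∀ T, IsSubalg m T → S ≤ T → T = S ∨ T = ⊤

/-- The Frattini subalgebra `F(L)`: the intersection of all maximal subalgebras. -/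
def frattiniSub : Submodule F L := sInf {S | IsMaxSubalg m S}

/-- The Frattini ideal `φ(L)`: the largest ideal contained in the Frattini
subalgebra. -/
def frattiniIdeal : Submodule F L :=
  sSup {I | IsIdeal m I ∧ I ≤ frattiniSub m}

/-- `Leib(L)`: the span of all squares `x·x`. -/
def leibIdeal : Submodule F L := Submodule.span F {z | ∃ x : L, z = m x x}

/-- The subalgebra generated by a set. -/
def genBy (s : Set L) : Submodule F L := sInf {S | IsSubalg m S ∧ s ⊆ S}

/-- A subalgebra is two-generated if it is generated as an algebra by two elements. -/
def TwoGenerated (S : Submodule F L) : Prop := ∃ x y : L, genBy m {x, y} = S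

/-- A subalgebra `S` is supersolvable if there is a chain of ideals of `S`,
`0 = S₀ ⊂ S₁ ⊂ ⋯ ⊂ Sₙ = S`, with `dim Sᵢ = i`. -/
def IsSupersolvable (S : Submodule F L) : Prop :=
  ∃ (n : ℕ) (c : ℕ → Submodule F L), c 0 = ⊥ ∧ c n = S ∧
    (∀ i, i < n → c i ≤ c (i + 1)) ∧
    (∀ i, i ≤ n → IsIdealOf m S (c i)) ∧
    (∀ i, i ≤ n → Module.finrank F (c i) = i)

/-- A subspace `S` is nil on `L` if left multiplication by each of its elements is a
nilpotent operator. -/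
def IsNilOn (S : Submodule F L) : Prop :=
  ∀ x ∈ S, IsNilpotent (m x : Module.End F L)

open scoped TensorProduct in
/-- A subspace `S` is triangulable on `L` if, after extending scalars to the algebraic
closure `K` of `F`, the space `K ⊗ L` admits a basis with respect to which the left
multiplication operators by all elements of `K ⊗ S` are upper triangular matrices.
(Since upper triangular matrices form a `K`-subspace of matrices, it suffices that the
base-changed left multiplication by each `x ∈ S` is upper triangular.) -/
def IsTriangulableOn (S : Submodule F L) : Prop :=
  ∃ (n : ℕ) (b : Basis (Fin n) (AlgebraicClosure F) ((AlgebraicClosure F) ⊗[F] L)),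
    ∀ x ∈ S, ∀ i j : Fin n, j < i →
      LinearMap.toMatrix b b (LinearMap.baseChange (AlgebraicClosure F) (m x)) i j = 0

end LeibnizDefs

/-!
The left Leibniz identity says that left multiplication turns the product into the commutator, so
the operators `L_t`, `t ∈ T`, form a Lie subalgebra of `End L`, normalized by every `L_s`, `s ∈ S`.
By Engel's theorem this Lie subalgebra acts nilpotently on `L`. Adjoining one nilpotent operator
`L_s` that normalizes it again gives a Lie algebra acting nilpotently, and this contains
`L_s + L_t`.
-/

section LieModule

variable {R L M : Type*} [CommRing R] [LieRing L] [LieAlgebra R L]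
variable [AddCommGroup M] [Module R M] [LieRingModule L M] [LieModule R L M]
variable {H : LieSubalgebra R L} {x : L}

/-- The Lie subalgebra `R x + H` obtained by adjoining to a Lie subalgebra `H` an element `x` of
its normalizer. -/
def adjoinNormalizing (hx : x ∈ H.normalizer) : LieSubalgebra R L where
  __ := R ∙ x ⊔ H.toSubmodule
  lie_mem' := LieSubalgebra.lie_mem_sup_of_mem_normalizer hx

lemma mem_adjoinNormalizing (hx : x ∈ H.normalizer) : x ∈ adjoinNormalizing hx :=
  mem_sup_left (mem_span_singleton_self x)

lemma le_adjoinNormalizing (hx : x ∈ H.normalizer) : H ≤ adjoinNormalizing hx :=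
  fun _ hy ↦ mem_sup_right hy

lemma adjoinNormalizing_le_normalizer (hx : x ∈ H.normalizer) :
    adjoinNormalizing hx ≤ H.normalizer :=
  (LieSubalgebra.toSubmodule_le_toSubmodule _ _).mp <|
    sup_le ((span_singleton_le_iff_mem _ _).mpr hx) H.le_normalizer

lemma exists_lieIdeal_span_sup_eq_top (hx : x ∈ H.normalizer) :
    ∃ I : LieIdeal R (adjoinNormalizing hx),
      (∀ z, z ∈ I ↔ (z : L) ∈ H) ∧
        R ∙ (⟨x, mem_adjoinNormalizing hx⟩ : adjoinNormalizing hx) ⊔ I.toSubmodule = ⊤ := by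
  obtain ⟨I, hI⟩ := LieSubalgebra.exists_nested_lieIdeal_ofLe_normalizer
    (le_adjoinNormalizing hx) (adjoinNormalizing_le_normalizer hx)
  have mem_I (z : adjoinNormalizing hx) : z ∈ I ↔ (z : L) ∈ H := by
    rw [← LieSubalgebra.mem_ofLe (le_adjoinNormalizing hx), ← hI]
    rfl
  refine ⟨I, mem_I, eq_top_iff.mpr ?_⟩
  rintro ⟨z, hz⟩ -
  obtain ⟨u, hu, y, hy, rfl⟩ := mem_sup.mp hz
  obtain ⟨c, rfl⟩ := mem_span_singleton.mp hu
  exact mem_sup.mpr ⟨c • ⟨x, mem_adjoinNormalizing hx⟩, smul_mem _ c (mem_span_singleton_self _),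
    ⟨y, le_adjoinNormalizing hx hy⟩, (mem_I _).mpr hy, rfl⟩

lemma isNilpotent_adjoinNormalizing [LieModule.IsNilpotent H M] (hx : x ∈ H.normalizer)
    (hxnil : IsNilpotent (LieModule.toEnd R L M x)) :
    LieModule.IsNilpotent (adjoinNormalizing hx) M := by
  obtain ⟨I, mem_I, hI⟩ := exists_lieIdeal_span_sup_eq_top hx
  let toI : H →ₗ⁅R⁆ I :=
    { toFun y := ⟨⟨y, le_adjoinNormalizing hx y.2⟩, (mem_I _).mpr y.2⟩
      map_add' _ _ := rfl
      map_smul' _ _ := rfl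
      map_lie' := rfl }
  have toI_surjective : Function.Surjective toI := fun z ↦ ⟨⟨z, (mem_I _).mp z.2⟩, rfl⟩
  have : LieModule.IsNilpotent I M :=
    toI_surjective.lieModuleIsNilpotent (g := LinearMap.id) (fun _ _ ↦ rfl)
      Function.surjective_id
  exact LieSubmodule.isNilpotentOfIsNilpotentSpanSupEqTop hI hxnil this

lemma isNilpotent_toEnd_add [LieModule.IsNilpotent H M] (hx : x ∈ H.normalizer)
    (hxnil : IsNilpotent (LieModule.toEnd R L M x)) {y : L} (hy : y ∈ H) :
    IsNilpotent (LieModule.toEnd R L M (x + y)) :=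
  have := isNilpotent_adjoinNormalizing hx hxnil
  LieModule.isNilpotent_toEnd_of_isNilpotent R (adjoinNormalizing hx) M
    ⟨x + y, add_mem (mem_adjoinNormalizing hx) (le_adjoinNormalizing hx hy)⟩

end LieModule

section Leibniz

attribute [local instance] LieRing.ofAssociativeRing

variable {F : Type*} [Field F] {L : Type*} [AddCommGroup L] [Module F L]
variable {m : L →ₗ[F] L →ₗ[F] L} {S T : Submodule F L}

lemma IsLeibniz.lie_leftMul (hm : IsLeibniz m) (x y : L) :
    ⁅(m x : Module.End F L), (m y : Module.End F L)⁆ = m (m x y) := by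
  ext z
  exact sub_eq_of_eq_add (hm x y z)

/-- The Lie algebra of left multiplications by the elements of a subalgebra `T` of a Leibniz
algebra. -/
def leftMulLieSubalgebra (hm : IsLeibniz m) (hT : IsSubalg m T) :
    LieSubalgebra F (Module.End F L) where
  __ := (T.map m : Submodule F (Module.End F L))
  lie_mem' := by
    rintro _ _ ⟨x, hx, rfl⟩ ⟨y, hy, rfl⟩
    exact ⟨m x y, hT x hx y hy, (hm.lie_leftMul x y).symm⟩

lemma leftMul_mem_normalizer (hm : IsLeibniz m) (hT : IsSubalg m T) {s : L}
    (hs : ∀ t ∈ T, m s t ∈ T) :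
    (m s : Module.End F L) ∈ (leftMulLieSubalgebra hm hT).normalizer := by
  rw [LieSubalgebra.mem_normalizer_iff]
  rintro _ ⟨t, ht, rfl⟩
  exact ⟨m s t, hs t ht, (hm.lie_leftMul s t).symm⟩

lemma IsNilOn.isNilpotent_leftMulLieSubalgebra [FiniteDimensional F T] (hm : IsLeibniz m)
    (hT : IsSubalg m T) (hTnil : IsNilOn m T) :
    LieModule.IsNilpotent (leftMulLieSubalgebra hm hT) L := by
  have : FiniteDimensional F (leftMulLieSubalgebra hm hT) :=
    inferInstanceAs (FiniteDimensional F (T.map m))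
  rw [LieModule.isNilpotent_iff_forall (R := F)]
  rintro ⟨_, t, ht, rfl⟩
  exact hTnil t ht

lemma IsSubalg.sup (hS : IsSubalg m S) (hT : IsSubalg m T)
    (hnorm : ∀ x ∈ S, ∀ t ∈ T, m x t ∈ T ∧ m t x ∈ T) : IsSubalg m (S ⊔ T) := by
  intro x hx y hy
  obtain ⟨s, hs, t, ht, rfl⟩ := mem_sup.mp hx
  obtain ⟨s', hs', t', ht', rfl⟩ := mem_sup.mp hy
  have expand : m (s + t) (s' + t') = m s s' + (m t s' + (m s t' + m t t')) := by
    simp only [map_add, LinearMap.add_apply]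
    abel
  rw [expand]
  exact add_mem_sup (hS s hs s' hs')
    (add_mem (hnorm s' hs' t ht).2 (add_mem (hnorm s hs t' ht').1 (hT t ht t' ht')))

lemma IsNilOn.sup [FiniteDimensional F T] (hm : IsLeibniz m) (hT : IsSubalg m T)
    (hSnil : IsNilOn m S) (hTnil : IsNilOn m T) (hnorm : ∀ x ∈ S, ∀ t ∈ T, m x t ∈ T) :
    IsNilOn m (S ⊔ T) := by
  intro x hx
  obtain ⟨s, hs, t, ht, rfl⟩ := mem_sup.mp hx
  have := hTnil.isNilpotent_leftMulLieSubalgebra hm hT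
  rw [map_add]
  exact isNilpotent_toEnd_add (leftMul_mem_normalizer hm hT (hnorm s hs)) (hSnil s hs)
    (mem_map_of_mem ht)

theorem sum_of_nil_subalgebras_is_nil_general [FiniteDimensional F T] (hm : IsLeibniz m)
    (hS : IsSubalg m S) (hT : IsSubalg m T) (hSnil : IsNilOn m S) (hTnil : IsNilOn m T)
    (hnorm : ∀ x ∈ S, ∀ t ∈ T, m x t ∈ T ∧ m t x ∈ T) :
    IsSubalg m (S ⊔ T) ∧ IsNilOn m (S ⊔ T) :=
  ⟨hS.sup hT hnorm, hSnil.sup hm hT hTnil fun x hx t ht ↦ (hnorm x hx t ht).1⟩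

end Leibniz

/-- Let `L` be a finite-dimensional Leibniz algebra and `S`, `T`
subalgebras of `L` that are nil on `L`, with `S` contained in the normalizer of `T`.
Then the subalgebra `S + T` is nil on `L`. -/
theorem sum_of_nil_subalgebras_is_nil
    {F : Type*} [Field F] {L : Type*} [AddCommGroup L] [Module F L]
    [FiniteDimensional F L]
    (m : L →ₗ[F] L →ₗ[F] L) (hm : IsLeibniz m)
    (S T : Submodule F L) (hS : IsSubalg m S) (hT : IsSubalg m T)
    (hSnil : IsNilOn m S) (hTnil : IsNilOn m T)
    (hnorm : ∀ x ∈ S, ∀ t ∈ T, m x t ∈ T ∧ m t x ∈ T) :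
    IsSubalg m (S ⊔ T) ∧ IsNilOn m (S ⊔ T) :=
  sum_of_nil_subalgebras_is_nil_general hm hS hT hSnil hTnil hnorm
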